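/- The Hilbert space V₂ decomposes orthogonally as V₂ = ker Q ⊕ R(Q), where ker Q = ker T|_{V₂} ∩ ker T*|_{V₂} and R(Q) = T(Dom T ∩ V₁) ⊕ T*(Dom T* ∩ V₃); in particular V₂ = (ker T|_{V₂} ∩ ker T*|_{V₂}) ⊕ T(Dom T ∩ V₁) ⊕ T*(Dom T* ∩ V₃) is an orthogonal decomposition into three pairwise orthogonal closed subspaces. -/

import Mathlib

open scoped LinearPMap

/-- `T'` is the restriction of the partially defined operator `T` to the subspaces `V` (source)
and `W` (target): the domain of `T'` consists exactly of the elements of `V` lying in the domain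
of `T`, and the values of `T'` agree with those of `T` (in particular `T` maps `Dom T ∩ V`
into `W`). -/
def IsRestrictionOf {R E : Type*} [Ring R] [AddCommGroup E] [Module R E]
    (T : E →ₗ.[R] E) (V W : Submodule R E) (T' : ↥V →ₗ.[R] ↥W) : Prop :=
  (∀ u : V, u ∈ T'.domain ↔ (u : E) ∈ T.domain) ∧
  ∀ (u : V) (hu : u ∈ T'.domain) (hu' : (u : E) ∈ T.domain),
    ((T' ⟨u, hu⟩ : W) : E) = T ⟨(u : E), hu'⟩

section helpers

theorem aux_closed_restr {H : Type*} [NormedAddCommGroup H] [InnerProductSpace ℂ H]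
    (T : H →ₗ.[ℂ] H) (hTc : T.IsClosed) (V W : Submodule ℂ H) (T' : ↥V →ₗ.[ℂ] ↥W)
    (h : IsRestrictionOf T V W T') : T'.IsClosed := by
  have e : (T'.graph : Set (V × W)) =
      (fun p : V × W => ((p.1 : H), (p.2 : H))) ⁻¹' (T.graph : Set (H × H)) := by
    ext ⟨v, w⟩
    simp only [SetLike.mem_coe, LinearPMap.mem_graph_iff, Set.mem_preimage]
    constructor
    · rintro ⟨a, rfl, rfl⟩
      exact ⟨⟨(a : V), (h.1 _).1 a.2⟩, rfl, (h.2 _ a.2 _).symm⟩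
    · rintro ⟨a, ha, hb⟩
      have hv : (v : H) ∈ T.domain := ha ▸ a.2
      refine ⟨⟨v, (h.1 _).2 hv⟩, rfl, ?_⟩
      apply Subtype.ext
      rw [h.2 v _ hv, ← hb]
      congr 1
      exact Subtype.ext ha.symm
  unfold LinearPMap.IsClosed
  rw [e]
  exact IsClosed.preimage (by fun_prop) hTc

variable {X Y Z : Type*} [NormedAddCommGroup X] [InnerProductSpace ℂ X] [CompleteSpace X]
  [NormedAddCommGroup Y] [InnerProductSpace ℂ Y] [CompleteSpace Y]
  [NormedAddCommGroup Z] [InnerProductSpace ℂ Z] [CompleteSpace Z]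

theorem aux_mem_ker (A : X →ₗ.[ℂ] Y) (x : X) :
    x ∈ (LinearMap.ker A.toFun).map A.domain.subtype ↔ ∃ h : x ∈ A.domain, A ⟨x, h⟩ = 0 := by
  simp only [Submodule.mem_map, LinearMap.mem_ker]
  constructor
  · rintro ⟨a, ha, rfl⟩
    exact ⟨a.2, ha⟩
  · rintro ⟨h, h0⟩
    exact ⟨⟨x, h⟩, h0, rfl⟩

theorem aux_ker_closed (A : X →ₗ.[ℂ] Y) (hA : A.IsClosed) :
    IsClosed (((LinearMap.ker A.toFun).map A.domain.subtype : Submodule ℂ X) : Set X) := by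
  have e : (((LinearMap.ker A.toFun).map A.domain.subtype : Submodule ℂ X) : Set X) =
      (fun x : X => (x, (0 : Y))) ⁻¹' (A.graph : Set (X × Y)) := by
    ext x
    rw [SetLike.mem_coe, aux_mem_ker]
    simp only [SetLike.mem_coe, LinearPMap.mem_graph_iff, Set.mem_preimage]
    constructor
    · rintro ⟨h, h0⟩
      exact ⟨⟨x, h⟩, rfl, h0⟩
    · rintro ⟨a, rfl, h0⟩
      exact ⟨a.2, h0⟩
  rw [e]
  exact IsClosed.preimage (by fun_prop) hA

theorem aux_riesz (A : X →ₗ.[ℂ] Y) (hA : A.IsClosed)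
    (hR : IsClosed ((LinearMap.range A.toFun : Submodule ℂ Y) : Set Y)) (y : X)
    (hy : y ∈ ((LinearMap.ker A.toFun).map A.domain.subtype)ᗮ) :
    ∃ w ∈ LinearMap.range A.toFun, ∀ x : A.domain, inner ℂ y (x : X) = inner ℂ w (A x) := by
  set R := LinearMap.range A.toFun with hRdef
  haveI : CompleteSpace R := hR.completeSpace_coe
  haveI : CompleteSpace A.graph := IsClosed.completeSpace_coe (hs := hA)
  have hmem : ∀ g : A.graph, (g : X × Y).2 ∈ R := by
    rintro ⟨⟨a, b⟩, hg⟩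
    obtain ⟨c, _, h2⟩ := (LinearPMap.mem_graph_iff A).1 hg
    exact ⟨c, h2⟩
  let p : A.graph →L[ℂ] R :=
    ((ContinuousLinearMap.snd ℂ X Y).comp A.graph.subtypeL).codRestrict R hmem
  have hp : Function.Surjective p := by
    rintro ⟨_, c, rfl⟩
    exact ⟨⟨((c : X), A c), A.mem_graph c⟩, rfl⟩
  obtain ⟨C, hC, hpre⟩ := p.exists_preimage_norm_le hp
  choose s hs1 hs2 using hpre
  have hwd : ∀ (x : A.domain) (g : A.graph), A x = (p g : Y) →
      inner ℂ y (g : X × Y).1 = inner ℂ y (x : X) := by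
    rintro x ⟨⟨a, b⟩, hg⟩ h
    obtain ⟨c, h1, h2⟩ := (LinearPMap.mem_graph_iff A).1 hg
    have h1 : (c : X) = a := h1
    have h2 : A c = b := h2
    have h : A x = b := h
    subst h1
    show inner ℂ y (c : X) = _
    rw [← sub_eq_zero, ← inner_sub_right]
    refine (Submodule.mem_orthogonal' _ _).1 hy _ ?_
    refine ⟨c - x, ?_, rfl⟩
    show A.toFun (c - x) = 0
    rw [map_sub]
    exact sub_eq_zero.2 (h2.trans h.symm)
  have hdom : ∀ g : A.graph, ∃ x : A.domain, (x : X) = (g : X × Y).1 ∧ A x = (p g : Y) :=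
    fun g => (LinearPMap.mem_graph_iff A).1 g.2
  have hwd2 : ∀ g g' : A.graph, p g = p g' →
      inner ℂ y (g : X × Y).1 = inner ℂ y (g' : X × Y).1 := by
    intro g g' h
    obtain ⟨x, hx1, hx2⟩ := hdom g'
    rw [← hx1]
    exact hwd x g (by rw [hx2, h])
  let φ₀ : R →ₗ[ℂ] ℂ :=
    { toFun := fun z => inner ℂ y (s z : X × Y).1
      map_add' := fun a b => by
        rw [← inner_add_right]
        exact hwd2 (s (a + b)) (s a + s b) (by rw [map_add, hs1, hs1, hs1])
      map_smul' := fun c a => by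
        rw [RingHom.id_apply, smul_eq_mul, ← inner_smul_right]
        exact hwd2 (s (c • a)) (c • s a) (by rw [map_smul, hs1, hs1]) }
  let φ : R →L[ℂ] ℂ := φ₀.mkContinuous (‖y‖ * C) (fun z => by
    show ‖inner ℂ y (s z : X × Y).1‖ ≤ _
    refine (norm_inner_le_norm _ _).trans ?_
    rw [mul_assoc]
    refine mul_le_mul_of_nonneg_left ?_ (norm_nonneg _)
    exact (norm_fst_le (s z : X × Y)).trans (hs2 z))
  refine ⟨((InnerProductSpace.toDual ℂ R).symm φ : R), Subtype.coe_prop _, fun x => ?_⟩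
  have h := InnerProductSpace.toDual_symm_apply (𝕜 := ℂ) (x := (⟨A x, x, rfl⟩ : R)) (y := φ)
  rw [Submodule.coe_inner] at h
  refine Eq.trans ?_ h.symm
  exact (hwd x _ (by rw [hs1])).symm

/-- closed range theorem -/
theorem aux_closed_range (A : X →ₗ.[ℂ] Y) (hA : A.IsClosed) (hd : Dense (A.domain : Set X))
    (hR : IsClosed ((LinearMap.range A.toFun : Submodule ℂ Y) : Set Y)) (y : X)
    (hy : y ∈ ((LinearMap.ker A.toFun).map A.domain.subtype)ᗮ) :
    ∃ w ∈ LinearMap.range A.toFun, ∃ h : w ∈ (A†).domain, A† ⟨w, h⟩ = y := by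
  obtain ⟨w, hw, h⟩ := aux_riesz A hA hR y hy
  have hm : w ∈ (A†).domain := LinearPMap.mem_adjoint_domain_of_exists w ⟨y, h⟩
  exact ⟨w, hw, hm, LinearPMap.adjoint_apply_eq hd ⟨w, hm⟩ h⟩

theorem aux_lift (A : X →ₗ.[ℂ] Y) (hA : A.IsClosed) (w : Y) (hw : w ∈ LinearMap.range A.toFun) :
    ∃ u : A.domain, A u = w ∧ (u : X) ∈ ((LinearMap.ker A.toFun).map A.domain.subtype)ᗮ := by
  obtain ⟨u0, rfl⟩ := hw
  set K := (LinearMap.ker A.toFun).map A.domain.subtype with hK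
  haveI : CompleteSpace K := (aux_ker_closed A hA).completeSpace_coe
  obtain ⟨k, hk, z, hz, e⟩ := K.exists_add_mem_mem_orthogonal (u0 : X)
  obtain ⟨hk1, hk2⟩ := (aux_mem_ker A k).1 hk
  refine ⟨u0 - ⟨k, hk1⟩, ?_, ?_⟩
  · show A.toFun _ = _
    rw [map_sub]
    have : A.toFun ⟨k, hk1⟩ = 0 := hk2
    rw [this, sub_zero]
  · have : ((u0 - ⟨k, hk1⟩ : A.domain) : X) = z := by
      show (u0 : X) - k = z
      rw [e]; abel
    rw [this]; exact hz

theorem aux_ker_adj (A : X →ₗ.[ℂ] Y) (hd : Dense (A.domain : Set X)) :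
    (LinearMap.ker (A†).toFun).map (A†).domain.subtype = (LinearMap.range A.toFun)ᗮ := by
  ext w
  rw [aux_mem_ker, Submodule.mem_orthogonal']
  constructor
  · rintro ⟨h, h0⟩ _ ⟨x, rfl⟩
    have := LinearPMap.adjoint_isFormalAdjoint hd ⟨w, h⟩ x
    rw [h0, inner_zero_left] at this
    exact this.symm
  · intro h
    have h' : ∀ x : A.domain, inner ℂ (0 : X) (x : X) = inner ℂ w (A x) := fun x => by
      rw [inner_zero_left]; exact (h _ ⟨x, rfl⟩).symm
    have hm : w ∈ (A†).domain := LinearPMap.mem_adjoint_domain_of_exists w ⟨0, h'⟩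
    exact ⟨hm, LinearPMap.adjoint_apply_eq hd ⟨w, hm⟩ h'⟩

theorem aux_range_adj (A : X →ₗ.[ℂ] Y) (hA : A.IsClosed) (hd : Dense (A.domain : Set X))
    (hR : IsClosed ((LinearMap.range A.toFun : Submodule ℂ Y) : Set Y)) :
    LinearMap.range (A†).toFun = ((LinearMap.ker A.toFun).map A.domain.subtype)ᗮ := by
  ext y
  constructor
  · rintro ⟨w, rfl⟩
    rw [Submodule.mem_orthogonal']
    intro x hx
    obtain ⟨h, h0⟩ := (aux_mem_ker A x).1 hx
    have := LinearPMap.adjoint_isFormalAdjoint hd w ⟨x, h⟩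
    rw [h0, inner_zero_right] at this
    exact this
  · intro hy
    obtain ⟨w, _, h, e⟩ := aux_closed_range A hA hd hR y hy
    exact ⟨⟨w, h⟩, e⟩

theorem aux_main (A : X →ₗ.[ℂ] Y) (hA : A.IsClosed) (hAd : Dense (A.domain : Set X))
    (hAR : IsClosed ((LinearMap.range A.toFun : Submodule ℂ Y) : Set Y))
    (B : Y →ₗ.[ℂ] Z) (hB : B.IsClosed) (hBd : Dense (B.domain : Set Y))
    (hBR : IsClosed ((LinearMap.range B.toFun : Submodule ℂ Z) : Set Z))
    (hBA : LinearMap.range A.toFun ≤ (LinearMap.ker B.toFun).map B.domain.subtype)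
    (Q : Y →ₗ.[ℂ] Y)
    (hQd : ∀ x : Y, x ∈ Q.domain ↔
      ∃ (h1 : x ∈ B.domain) (h2 : x ∈ (A†).domain),
        B ⟨x, h1⟩ ∈ (B†).domain ∧ A† ⟨x, h2⟩ ∈ A.domain)
    (hQv : ∀ (x : Y) (hx : x ∈ Q.domain) (h1 : x ∈ B.domain) (h2 : x ∈ (A†).domain)
      (h3 : B ⟨x, h1⟩ ∈ (B†).domain) (h4 : A† ⟨x, h2⟩ ∈ A.domain),
      Q ⟨x, hx⟩ = B† ⟨B ⟨x, h1⟩, h3⟩ + A ⟨A† ⟨x, h2⟩, h4⟩) :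
    (LinearMap.ker Q.toFun).map Q.domain.subtype =
      ((LinearMap.ker B.toFun).map B.domain.subtype) ⊓
        ((LinearMap.ker (A†).toFun).map (A†).domain.subtype) ∧
    LinearMap.range Q.toFun = LinearMap.range A.toFun ⊔ LinearMap.range (B†).toFun ∧
    (LinearMap.ker Q.toFun).map Q.domain.subtype ≤ (LinearMap.range A.toFun)ᗮ ∧
    (LinearMap.ker Q.toFun).map Q.domain.subtype ≤ (LinearMap.range (B†).toFun)ᗮ ∧
    LinearMap.range A.toFun ≤ (LinearMap.range (B†).toFun)ᗮ ∧
    IsClosed (((LinearMap.ker Q.toFun).map Q.domain.subtype : Submodule ℂ Y) : Set Y) ∧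
    IsClosed ((LinearMap.range A.toFun : Submodule ℂ Y) : Set Y) ∧
    IsClosed ((LinearMap.range (B†).toFun : Submodule ℂ Y) : Set Y) ∧
    (LinearMap.ker Q.toFun).map Q.domain.subtype ⊔ LinearMap.range Q.toFun = ⊤ := by
  have hkA := aux_ker_adj A hAd
  have hrB := aux_range_adj B hB hBd hBR
  set KB := (LinearMap.ker B.toFun).map B.domain.subtype with hKB
  set RA := LinearMap.range A.toFun with hRA
  haveI : CompleteSpace KB := (aux_ker_closed B hB).completeSpace_coe
  haveI : CompleteSpace RA := hAR.completeSpace_coe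
  have hker : (LinearMap.ker Q.toFun).map Q.domain.subtype = KB ⊓ RAᗮ := by
    ext x
    rw [aux_mem_ker, Submodule.mem_inf, ← hkA, hKB, aux_mem_ker, aux_mem_ker]
    constructor
    · rintro ⟨hx, h0⟩
      obtain ⟨h1, h2, h3, h4⟩ := (hQd x).1 hx
      rw [hQv x hx h1 h2 h3 h4] at h0
      have e1 := LinearPMap.adjoint_isFormalAdjoint hBd ⟨_, h3⟩ ⟨x, h1⟩
      have e2 := LinearPMap.adjoint_isFormalAdjoint hAd ⟨x, h2⟩ ⟨_, h4⟩
      have e3 := inner_conj_symm (𝕜 := ℂ) (A ⟨_, h4⟩) x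
      have e0 := congrArg (fun v => inner ℂ v x) h0
      simp only [inner_add_left, inner_zero_left] at e0
      have e2' : inner ℂ (A ⟨_, h4⟩) x = inner ℂ (A† ⟨x, h2⟩) (A† ⟨x, h2⟩) := by
        rw [← inner_conj_symm, ← inner_conj_symm (A† ⟨x, h2⟩)]
        exact congrArg _ e2.symm
      rw [e2', show inner ℂ (B† ⟨B ⟨x, h1⟩, h3⟩) x = _ from e1] at e0
      have e0' := congrArg Complex.re e0
      have q1 : (inner ℂ (B ⟨x, h1⟩) (B ⟨x, h1⟩)).re = ‖B ⟨x, h1⟩‖ ^ 2 :=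
        inner_self_eq_norm_sq (𝕜 := ℂ) _
      have q2 : (inner ℂ (A† ⟨x, h2⟩) (A† ⟨x, h2⟩)).re = ‖A† ⟨x, h2⟩‖ ^ 2 :=
        inner_self_eq_norm_sq (𝕜 := ℂ) _
      rw [Complex.add_re, q2, Complex.zero_re] at e0'
      replace e0' : ‖B ⟨x, h1⟩‖ ^ 2 + ‖A† ⟨x, h2⟩‖ ^ 2 = 0 := by rw [← q1]; exact e0'
      have := sq_nonneg ‖B ⟨x, h1⟩‖
      have := sq_nonneg ‖A† ⟨x, h2⟩‖
      refine ⟨⟨h1, ?_⟩, ⟨h2, ?_⟩⟩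
      · have : ‖B ⟨x, h1⟩‖ ^ 2 = 0 := by
          linarith
        simpa using this
      · have : ‖A† ⟨x, h2⟩‖ ^ 2 = 0 := by
          linarith
        simpa using this
    · rintro ⟨⟨h1, z1⟩, ⟨h2, z2⟩⟩
      have h3 : B ⟨x, h1⟩ ∈ (B†).domain := by rw [z1]; exact zero_mem _
      have h4 : A† ⟨x, h2⟩ ∈ A.domain := by rw [z2]; exact zero_mem _
      refine ⟨(hQd x).2 ⟨h1, h2, h3, h4⟩, ?_⟩
      rw [hQv x _ h1 h2 h3 h4]
      have z3 : (⟨B ⟨x, h1⟩, h3⟩ : (B†).domain) = 0 := Subtype.ext z1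
      have z4 : (⟨A† ⟨x, h2⟩, h4⟩ : A.domain) = 0 := Subtype.ext z2
      rw [z3, z4, LinearPMap.map_zero, LinearPMap.map_zero, add_zero]
  have hran : LinearMap.range Q.toFun = RA ⊔ LinearMap.range (B†).toFun := by
    apply le_antisymm
    · rintro _ ⟨⟨x, hx⟩, rfl⟩
      obtain ⟨h1, h2, h3, h4⟩ := (hQd x).1 hx
      have e := hQv x hx h1 h2 h3 h4
      rw [show Q.toFun ⟨x, hx⟩ = _ from e, add_comm]
      exact Submodule.add_mem_sup ⟨_, rfl⟩ ⟨_, rfl⟩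
    · refine sup_le ?_ ?_
      · intro z hz
        obtain ⟨u, hu, hu'⟩ := aux_lift A hA z hz
        obtain ⟨w, hw, h2, e⟩ := aux_closed_range A hA hAd hAR u hu'
        obtain ⟨h1, z1⟩ := (aux_mem_ker B w).1 (hBA hw)
        have h3 : B ⟨w, h1⟩ ∈ (B†).domain := by rw [z1]; exact zero_mem _
        have h4 : A† ⟨w, h2⟩ ∈ A.domain := by rw [e]; exact u.2
        have hx := (hQd w).2 ⟨h1, h2, h3, h4⟩
        refine ⟨⟨w, hx⟩, ?_⟩
        have z3 : (⟨B ⟨w, h1⟩, h3⟩ : (B†).domain) = 0 := Subtype.ext z1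
        have z4 : (⟨A† ⟨w, h2⟩, h4⟩ : A.domain) = u := Subtype.ext e
        refine (hQv w hx h1 h2 h3 h4).trans ?_
        rw [z3, z4, LinearPMap.map_zero, zero_add, hu]
      · intro z hz
        rw [hrB] at hz
        obtain ⟨w, hw, h3', e⟩ := aux_closed_range B hB hBd hBR z hz
        obtain ⟨u, hu, hu'⟩ := aux_lift B hB w hw
        have : (u : Y) ∈ RAᗮ := Submodule.orthogonal_le hBA hu'
        rw [← hkA] at this
        obtain ⟨h2, z2⟩ := (aux_mem_ker (A†) (u : Y)).1 this
        have h3 : B ⟨u, u.2⟩ ∈ (B†).domain := by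
          rw [show B ⟨u, u.2⟩ = w from hu]; exact h3'
        have h4 : A† ⟨u, h2⟩ ∈ A.domain := by rw [z2]; exact zero_mem _
        have hx := (hQd u).2 ⟨u.2, h2, h3, h4⟩
        refine ⟨⟨u, hx⟩, ?_⟩
        have z3 : (⟨B ⟨u, u.2⟩, h3⟩ : (B†).domain) = ⟨w, h3'⟩ := Subtype.ext hu
        have z4 : (⟨A† ⟨u, h2⟩, h4⟩ : A.domain) = 0 := Subtype.ext z2
        refine (hQv u hx u.2 h2 h3 h4).trans ?_
        rw [z3, z4, LinearPMap.map_zero, add_zero, e]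
  have hKBo : KBᗮᗮ = KB := Submodule.orthogonal_orthogonal KB
  refine ⟨by rw [hker, hkA], hran, ?_, ?_, ?_, ?_, hAR, ?_, ?_⟩
  · rw [hker]; exact inf_le_right
  · rw [hker, hrB, hKBo]; exact inf_le_left
  · rw [hrB, hKBo]; exact hBA
  · rw [hker]
    exact (aux_ker_closed B hB).inter (Submodule.isClosed_orthogonal _)
  · rw [hrB]; exact Submodule.isClosed_orthogonal _
  · rw [hker, hran, hrB, eq_top_iff]
    intro v _
    obtain ⟨b, hb, a, ha, rfl⟩ := KB.exists_add_mem_mem_orthogonal v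
    obtain ⟨c, hc, d, hd, rfl⟩ := RA.exists_add_mem_mem_orthogonal b
    have hdK : d ∈ KB := by
      have := KB.sub_mem hb (hBA hc)
      rwa [add_sub_cancel_left] at this
    have : c + d + a = d + (c + a) := by abel
    rw [this]
    exact Submodule.add_mem_sup ⟨hdK, hd⟩ (Submodule.add_mem_sup hc ha)

end helpers

theorem stmt_6 {H : Type*} [NormedAddCommGroup H] [InnerProductSpace ℂ H] [CompleteSpace H]
    -- `T` is closed and densely defined, with range contained in `Dom T` and `T² = 0`
    (T : H →ₗ.[ℂ] H) (hTd : Dense (T.domain : Set H)) (hTc : T.IsClosed)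
    (hTr : ∀ u : T.domain, T u ∈ T.domain)
    (hT2 : ∀ u : T.domain, T ⟨T u, hTr u⟩ = 0)
    -- `P = T*T + TT*` with its natural domain; `P` is self-adjoint
    (P : H →ₗ.[ℂ] H)
    (hPdom : ∀ x : H, x ∈ P.domain ↔
      ∃ (h1 : x ∈ T.domain) (h2 : x ∈ (T†).domain),
        T ⟨x, h1⟩ ∈ (T†).domain ∧ T† ⟨x, h2⟩ ∈ T.domain)
    (hPval : ∀ (x : H) (hx : x ∈ P.domain) (h1 : x ∈ T.domain) (h2 : x ∈ (T†).domain)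
      (h3 : T ⟨x, h1⟩ ∈ (T†).domain) (h4 : T† ⟨x, h2⟩ ∈ T.domain),
      P ⟨x, hx⟩ = T† ⟨T ⟨x, h1⟩, h3⟩ + T ⟨T† ⟨x, h2⟩, h4⟩)
    (hPsa : IsSelfAdjoint P)
    -- the closed subspaces `V₁, V₂, V₃`
    (V₁ V₂ V₃ : Submodule ℂ H)
    (hV₁ : IsClosed (V₁ : Set H)) (hV₂ : IsClosed (V₂ : Set H)) (hV₃ : IsClosed (V₃ : Set H))
    [CompleteSpace V₁] [CompleteSpace V₂] [CompleteSpace V₃]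
    -- `T₁ = T|_{V₁} : V₁ ⇀ V₂` and `T₂ = T|_{V₂} : V₂ ⇀ V₃`, densely defined with closed range
    (T₁ : ↥V₁ →ₗ.[ℂ] ↥V₂) (hT₁ : IsRestrictionOf T V₁ V₂ T₁)
    (hT₁d : Dense (T₁.domain : Set V₁))
    (T₂ : ↥V₂ →ₗ.[ℂ] ↥V₃) (hT₂ : IsRestrictionOf T V₂ V₃ T₂)
    (hT₂d : Dense (T₂.domain : Set V₂))
    (hR₁ : IsClosed ((LinearMap.range T₁.toFun : Submodule ℂ V₂) : Set V₂))
    (hR₂ : IsClosed ((LinearMap.range T₂.toFun : Submodule ℂ V₃) : Set V₃))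
    -- `S₂ = T*|_{V₂} : V₂ ⇀ V₁` and `S₃ = T*|_{V₃} : V₃ ⇀ V₂`; the adjoint of `T|_{V₁}` is
    -- `T*|_{V₂}` and the adjoint of `T|_{V₂}` is `T*|_{V₃}`
    (S₂ : ↥V₂ →ₗ.[ℂ] ↥V₁) (hS₂ : IsRestrictionOf (T†) V₂ V₁ S₂)
    (S₃ : ↥V₃ →ₗ.[ℂ] ↥V₂) (hS₃ : IsRestrictionOf (T†) V₃ V₂ S₃)
    (hadj₁ : T₁† = S₂) (hadj₂ : T₂† = S₃)
    -- `Q = P|_{V₂}`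
    (Q : ↥V₂ →ₗ.[ℂ] ↥V₂) (hQ : IsRestrictionOf P V₂ V₂ Q)
    :
    -- `ker Q = ker T|_{V₂} ∩ ker T*|_{V₂}`
    (LinearMap.ker Q.toFun).map Q.domain.subtype =
      ((LinearMap.ker T₂.toFun).map T₂.domain.subtype) ⊓
        ((LinearMap.ker S₂.toFun).map S₂.domain.subtype) ∧
    -- `R(Q) = T(Dom T ∩ V₁) ⊕ T*(Dom T* ∩ V₃)`
    LinearMap.range Q.toFun = LinearMap.range T₁.toFun ⊔ LinearMap.range S₃.toFun ∧
    -- the three subspaces are pairwise orthogonal ...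
    (LinearMap.ker Q.toFun).map Q.domain.subtype ≤ (LinearMap.range T₁.toFun)ᗮ ∧
    (LinearMap.ker Q.toFun).map Q.domain.subtype ≤ (LinearMap.range S₃.toFun)ᗮ ∧
    LinearMap.range T₁.toFun ≤ (LinearMap.range S₃.toFun)ᗮ ∧
    -- ... and closed ...
    IsClosed (((LinearMap.ker Q.toFun).map Q.domain.subtype : Submodule ℂ V₂) : Set V₂) ∧
    IsClosed ((LinearMap.range T₁.toFun : Submodule ℂ V₂) : Set V₂) ∧
    IsClosed ((LinearMap.range S₃.toFun : Submodule ℂ V₂) : Set V₂) ∧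
    -- ... and `V₂ = ker Q ⊕ R(Q)` decomposes orthogonally
    (LinearMap.ker Q.toFun).map Q.domain.subtype ⊔ LinearMap.range Q.toFun = ⊤ := by
  subst hadj₁ hadj₂
  refine aux_main T₁ (aux_closed_restr T hTc _ _ _ hT₁) hT₁d hR₁ T₂
    (aux_closed_restr T hTc _ _ _ hT₂) hT₂d hR₂ ?_ Q ?_ ?_
  · rintro _ ⟨⟨x, hx⟩, rfl⟩
    have hx' := (hT₁.1 x).1 hx
    have e : ((T₁ ⟨x, hx⟩ : V₂) : H) = T ⟨x, hx'⟩ := hT₁.2 x hx hx'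
    have hm : ((T₁ ⟨x, hx⟩ : V₂) : H) ∈ T.domain := by rw [e]; exact hTr _
    refine (aux_mem_ker T₂ _).2 ⟨(hT₂.1 _).2 hm, ?_⟩
    apply Subtype.ext
    refine (hT₂.2 _ _ hm).trans ?_
    refine Eq.trans ?_ (hT2 ⟨x, hx'⟩)
    congr 1
    exact Subtype.ext e
  · intro x
    rw [hQ.1, hPdom]
    constructor
    · rintro ⟨h1, h2, h3, h4⟩
      refine ⟨(hT₂.1 _).2 h1, (hS₂.1 _).2 h2, (hS₃.1 _).2 ?_, (hT₁.1 _).2 ?_⟩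
      · rw [hT₂.2 x _ h1]; exact h3
      · rw [hS₂.2 x _ h2]; exact h4
    · rintro ⟨h1, h2, h3, h4⟩
      refine ⟨(hT₂.1 _).1 h1, (hS₂.1 _).1 h2, ?_, ?_⟩
      · rw [← hT₂.2 x h1]; exact (hS₃.1 _).1 h3
      · rw [← hS₂.2 x h2]; exact (hT₁.1 _).1 h4
  · intro x hx h1 h2 h3 h4
    have g1 := (hT₂.1 _).1 h1
    have g2 := (hS₂.1 _).1 h2
    have e1 := hT₂.2 x h1 g1
    have e2 := hS₂.2 x h2 g2
    have k3 := (hS₃.1 _).1 h3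
    have k4 := (hT₁.1 _).1 h4
    have g3 : T ⟨x, g1⟩ ∈ (T†).domain := by rw [← e1]; exact k3
    have g4 : T† ⟨x, g2⟩ ∈ T.domain := by rw [← e2]; exact k4
    apply Subtype.ext
    rw [hQ.2 x hx ((hQ.1 _).1 hx), hPval _ _ g1 g2 g3 g4, Submodule.coe_add,
      hS₃.2 _ h3 k3, hT₁.2 _ h4 k4]
    congr 2
    · exact Subtype.ext e1.symm
    · exact Subtype.ext e2.symm
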